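/- There exist constants C > 0 and s₁ ≥ 1, depending only on d, T, ρ₀ and C₀, with the following property. For all s ≥ s₁, λ ≥ s₁ and all admissible functions u, v satisfying, for every (x,t) ∈ Q, the pointwise inequalities |∂_t u + Δu| ≤ C₀(|u| + |∇u| + |v|) and |∂_t v − Δv − ρ₀ Δu| ≤ C₀(|u| + |v| + |∇u| + |∇v|), one has ∫_Q { |∂_t u|² + |Δu|² + sλφ|∇u|² + s²λ²φ²|u|² + (1/(sφ))(|∂_t v|² + |Δv|²) + λ|∇v|² + sλ²φ|v|² } e^{2sφ} dx dt + ∫_{ℝ^d} (s²λ|u(x,0)|² + s|∇u(x,0)|²) e^{2s} dx + ∫_{ℝ^d} (sλ|v(x,0)|² e^{2s} + |∇v(x,T)|² e^{2sφ(T)}) dx ≤ C ∫_{ℝ^d} (sλφ(T)|v(x,T)|² e^{2sφ(T)} + |∇v(x,0)|² e^{2s}) dx + C ∫_{ℝ^d} (s²λ²φ(T)²|u(x,T)|² + sφ(T)|∇u(x,T)|²) e^{2sφ(T)} dx. -/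

import Mathlib

open MeasureTheory Real Set

noncomputable section

/-- Spatial partial derivative of `f` in the `i`-th coordinate direction. -/
def spd {d : ℕ} (i : Fin d) (f : (Fin d → ℝ) → ℝ) (x : Fin d → ℝ) : ℝ :=
  fderiv ℝ f x (Pi.single i 1)

/-- Time derivative `∂_t u`. -/
def tder {d : ℕ} (u : (Fin d → ℝ) → ℝ → ℝ) (x : Fin d → ℝ) (t : ℝ) : ℝ :=
  deriv (u x) t

/-- Squared norm of the spatial gradient, `|∇u|²`. -/
def grad2 {d : ℕ} (u : (Fin d → ℝ) → ℝ → ℝ) (x : Fin d → ℝ) (t : ℝ) : ℝ :=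
  ∑ i : Fin d, (spd i (fun y => u y t) x) ^ 2

/-- Norm of the spatial gradient, `|∇u|`. -/
def gradNorm {d : ℕ} (u : (Fin d → ℝ) → ℝ → ℝ) (x : Fin d → ℝ) (t : ℝ) : ℝ :=
  Real.sqrt (grad2 u x t)

/-- Second spatial partial derivative `∂_i ∂_j u`. -/
def pdij {d : ℕ} (i j : Fin d) (u : (Fin d → ℝ) → ℝ → ℝ) (x : Fin d → ℝ) (t : ℝ) : ℝ :=
  spd i (fun y => spd j (fun z => u z t) y) x

/-- Spatial Laplacian `Δu`. -/
def lap {d : ℕ} (u : (Fin d → ℝ) → ℝ → ℝ) (x : Fin d → ℝ) (t : ℝ) : ℝ :=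
  ∑ i : Fin d, pdij i i u x t

/-- `Σ_{i,j=1}^d |∂_i∂_j u|²`. -/
def hess2 {d : ℕ} (u : (Fin d → ℝ) → ℝ → ℝ) (x : Fin d → ℝ) (t : ℝ) : ℝ :=
  ∑ i : Fin d, ∑ j : Fin d, (pdij i j u x t) ^ 2

/-- `u : ℝ^d × ℝ → ℝ` is admissible: `C^∞` and spatially compactly supported,
uniformly for `t ∈ [0,T]`. -/
def Admissible {d : ℕ} (T : ℝ) (u : (Fin d → ℝ) → ℝ → ℝ) : Prop :=
  ContDiff ℝ (⊤ : ℕ∞) (fun p : (Fin d → ℝ) × ℝ => u p.1 p.2) ∧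
  ∃ K₀ : Set (Fin d → ℝ), IsCompact K₀ ∧
    ∀ x t, x ∉ K₀ → t ∈ Set.Icc (0 : ℝ) T → u x t = 0

end

/-!
For the backward (`σ = 1`) and the forward (`σ = -1`) heat operator `∂ₜ + σΔ`, multiply the energy
`σ‖∇u‖² + (q + μ)‖u‖²` by a weight `w` with `w' = 2qw`. Up to a multiple of `w‖∂ₜu + σΔu‖²`, its
time derivative is a sum of squares plus `w((q' + 2μq - 2μ²)‖u‖² + 2μσ‖∇u‖²)`. For
`w = k^τ e^{2k}` with `k = sφ` one has `q = λk + τλ/2`, and since `q' = λ²k` dominates `2μq` when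
`μ = σλ/4`, both terms are positive for either sign of `σ`.

Taking `τ = 1` for `u` and `τ = 0` for `v`, a large multiple of the energy of `u` plus the energy
of `v` has a derivative that controls the whole system: the gain in `‖Δu‖²` absorbs the source
`ρ₀Δu` in the equation for `v`, and the remaining coupling terms are of lower order and are
absorbed for `λ` large. Integrating over `(0, T)`, the values of this energy at `0` and `T` yield
the boundary terms.
-/

open Function
open scoped ContDiff

section Calculus

variable {d : ℕ} {u : (Fin d → ℝ) → ℝ → ℝ} {f g : (Fin d → ℝ) → ℝ} {x : Fin d → ℝ} {t : ℝ}

/-- The partial derivative `∂ᵢ` acting on functions of space and time, so that it can be iterated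
and composed with `tder`. -/
noncomputable def spaceDeriv (i : Fin d) (u : (Fin d → ℝ) → ℝ → ℝ) : (Fin d → ℝ) → ℝ → ℝ :=
  fun x t => spd i (fun y => u y t) x

theorem grad2_nonneg (u : (Fin d → ℝ) → ℝ → ℝ) (x : Fin d → ℝ) (t : ℝ) : 0 ≤ grad2 u x t :=
  Finset.sum_nonneg fun _ _ => sq_nonneg _

theorem gradNorm_sq (u : (Fin d → ℝ) → ℝ → ℝ) (x : Fin d → ℝ) (t : ℝ) :
    gradNorm u x t ^ 2 = grad2 u x t :=
  Real.sq_sqrt (grad2_nonneg u x t)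

theorem spaceDeriv_eq_fderiv_uncurry (hu : DifferentiableAt ℝ (uncurry u) (x, t)) (i : Fin d) :
    spaceDeriv i u x t = fderiv ℝ (uncurry u) (x, t) (Pi.single i 1, 0) := by
  have h := hu.hasFDerivAt.comp (f := fun y : Fin d → ℝ => (y, t)) x
    ((hasFDerivAt_id x).prodMk (hasFDerivAt_const t x))
  calc spaceDeriv i u x t = fderiv ℝ (uncurry u ∘ fun y => (y, t)) x (Pi.single i 1) := rfl
    _ = fderiv ℝ (uncurry u) (x, t) (Pi.single i 1, 0) := by rw [h.fderiv]; simp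

theorem hasDerivAt_fderiv_uncurry (hu : DifferentiableAt ℝ (uncurry u) (x, t)) :
    HasDerivAt (u x) (fderiv ℝ (uncurry u) (x, t) (0, 1)) t :=
  hu.hasFDerivAt.comp_hasDerivAt (f := fun s : ℝ => (x, s)) t
    ((hasDerivAt_const t x).prodMk (hasDerivAt_id t))

theorem tder_eq_fderiv_uncurry (hu : DifferentiableAt ℝ (uncurry u) (x, t)) :
    tder u x t = fderiv ℝ (uncurry u) (x, t) (0, 1) :=
  (hasDerivAt_fderiv_uncurry hu).deriv

theorem hasDerivAt_tder (hu : DifferentiableAt ℝ (uncurry u) (x, t)) :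
    HasDerivAt (u x) (tder u x t) t :=
  tder_eq_fderiv_uncurry hu ▸ hasDerivAt_fderiv_uncurry hu

theorem tder_spaceDeriv_comm (hu : ContDiff ℝ 2 (uncurry u)) (i : Fin d) (x : Fin d → ℝ) (t : ℝ) :
    tder (spaceDeriv i u) x t = spaceDeriv i (tder u) x t := by
  have hdiff : Differentiable ℝ (uncurry u) := hu.differentiable (by simp)
  have hdiff' : Differentiable ℝ (fderiv ℝ (uncurry u)) :=
    (hu.fderiv_right (m := 1) (by norm_num)).differentiable (by simp)
  have hspace : uncurry (spaceDeriv i u) = fun p => fderiv ℝ (uncurry u) p (Pi.single i 1, 0) :=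
    funext fun p => spaceDeriv_eq_fderiv_uncurry (hdiff p) i
  have htime : uncurry (tder u) = fun p => fderiv ℝ (uncurry u) p (0, 1) :=
    funext fun p => tder_eq_fderiv_uncurry (hdiff p)
  have happly (w : (Fin d → ℝ) × ℝ) : Differentiable ℝ fun p => fderiv ℝ (uncurry u) p w :=
    hdiff'.clm_apply (differentiable_const w)
  have hsecond (w z : (Fin d → ℝ) × ℝ) :
      fderiv ℝ (fun p => fderiv ℝ (uncurry u) p w) (x, t) z
        = fderiv ℝ (fderiv ℝ (uncurry u)) (x, t) z w := by
    rw [fderiv_clm_apply (hdiff' _) (differentiableAt_const w)]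
    simp
  have hsymm : IsSymmSndFDerivAt ℝ (uncurry u) (x, t) :=
    hu.contDiffAt.isSymmSndFDerivAt (by simp)
  rw [tder_eq_fderiv_uncurry (hspace ▸ happly _ _),
    spaceDeriv_eq_fderiv_uncurry (htime ▸ happly _ _), hspace, htime, hsecond, hsecond]
  exact hsymm _ _

theorem continuous_spd (hf : ContDiff ℝ 1 f) (i : Fin d) : Continuous (spd i f) :=
  (hf.continuous_fderiv one_ne_zero).clm_apply continuous_const

theorem integral_mul_spd (hf : ContDiff ℝ 1 f) (hfs : HasCompactSupport f) (hg : ContDiff ℝ 1 g)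
    (i : Fin d) : ∫ x, f x * spd i g x = -∫ x, spd i f x * g x :=
  integral_mul_fderiv_eq_neg_fderiv_mul_of_integrable
    (((continuous_spd hf i).mul hg.continuous).integrable_of_hasCompactSupport
      (hfs.fderiv_apply ℝ _).mul_right)
    ((hf.continuous.mul (continuous_spd hg i)).integrable_of_hasCompactSupport hfs.mul_right)
    ((hf.continuous.mul hg.continuous).integrable_of_hasCompactSupport hfs.mul_right)
    (fun _ _ => hf.differentiable one_ne_zero _) (fun _ _ => hg.differentiable one_ne_zero _)

theorem integral_mul_sum_spd_spd (hf : ContDiff ℝ 1 f) (hfs : HasCompactSupport f)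
    (hg : ContDiff ℝ 2 g) :
    ∫ x, f x * ∑ i, spd i (spd i g) x = -∫ x, ∑ i, spd i f x * spd i g x := by
  have hg' (i : Fin d) : ContDiff ℝ 1 (spd i g) :=
    (hg.fderiv_right (m := 1) (by norm_num)).clm_apply contDiff_const
  have hleft (i : Fin d) : Integrable fun x => f x * spd i (spd i g) x :=
    (hf.continuous.mul (continuous_spd (hg' i) i)).integrable_of_hasCompactSupport hfs.mul_right
  have hright (i : Fin d) : Integrable fun x => spd i f x * spd i g x :=
    ((continuous_spd hf i).mul (hg' i).continuous).integrable_of_hasCompactSupport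
      (hfs.fderiv_apply ℝ _).mul_right
  simp only [Finset.mul_sum]
  rw [integral_finsetSum _ fun i _ => hleft i, integral_finsetSum _ fun i _ => hright i,
    ← Finset.sum_neg_distrib]
  exact Finset.sum_congr rfl fun i _ => integral_mul_spd hf hfs (hg' i) i

end Calculus

theorem hasDerivAt_setIntegral_of_isCompact {X : Type*} [TopologicalSpace X] [T2Space X]
    [MeasurableSpace X] [OpensMeasurableSpace X] {μ : Measure X} [IsFiniteMeasureOnCompacts μ]
    {F F' : X → ℝ → ℝ} {K : Set X} (hK : IsCompact K) (hF : ∀ t, Continuous fun x => F x t)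
    (hF' : Continuous (uncurry F')) (hderiv : ∀ x t, HasDerivAt (F x) (F' x t) t) (t : ℝ) :
    HasDerivAt (fun s => ∫ x in K, F x s ∂μ) (∫ x in K, F' x t ∂μ) t := by
  obtain ⟨B, hB⟩ := (hK.prod (isCompact_Icc (a := t - 1) (b := t + 1))).bddAbove_image
    hF'.norm.continuousOn
  refine (hasDerivAt_integral_of_dominated_loc_of_deriv_le (F := fun s x => F x s)
    (F' := fun s x => F' x s) (bound := fun _ => B)
    (Icc_mem_nhds (sub_one_lt t) (lt_add_one t))
    (Filter.Eventually.of_forall fun s => ?_) ((hF t).continuousOn.integrableOn_compact hK)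
    (Continuous.aestronglyMeasurable (by fun_prop)) ?_ (integrableOn_const hK.measure_ne_top)
    (Filter.Eventually.of_forall fun x s _ => hderiv x s)).2
  · exact (hF s).continuousOn.aestronglyMeasurable_of_isCompact hK hK.measurableSet
  · filter_upwards [ae_restrict_mem hK.measurableSet] with x hx s hs
    exact hB ⟨(x, s), ⟨hx, hs⟩, rfl⟩

namespace Admissible

variable {d : ℕ} {T t : ℝ} {u v : (Fin d → ℝ) → ℝ → ℝ}

theorem contDiff_uncurry (hu : Admissible T u) : ContDiff ℝ ∞ (uncurry u) :=
  hu.1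

theorem contDiff_slice (hu : Admissible T u) (t : ℝ) : ContDiff ℝ ∞ fun x => u x t :=
  hu.contDiff_uncurry.comp (contDiff_id.prodMk contDiff_const)

theorem hasCompactSupport (hu : Admissible T u) (ht : t ∈ Icc 0 T) :
    HasCompactSupport fun x => u x t :=
  let ⟨_, _, hK, hzero⟩ := hu
  HasCompactSupport.intro hK fun x hx => hzero x t hx ht

theorem integrable (hu : Admissible T u) (ht : t ∈ Icc 0 T) : Integrable fun x => u x t :=
  (hu.contDiff_slice t).continuous.integrable_of_hasCompactSupport (hu.hasCompactSupport ht)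

theorem continuousOn_integral (hu : Admissible T u) :
    ContinuousOn (fun t => ∫ x, u x t) (Icc 0 T) := by
  obtain ⟨hsm, K, hK, hzero⟩ := hu
  exact continuousOn_integral_of_compact_support (f := fun t x => u x t) hK
    (hsm.continuous.comp continuous_swap).continuousOn fun t x ht hx => hzero x t hx ht

protected theorem hasDerivAt_tder (hu : Admissible T u) (x : Fin d → ℝ) (t : ℝ) :
    HasDerivAt (u x) (tder u x t) t :=
  _root_.hasDerivAt_tder (hu.contDiff_uncurry.differentiable (by simp) _)

protected theorem mul (hu : Admissible T u) (hv : Admissible T v) :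
    Admissible T fun x t => u x t * v x t :=
  let ⟨hsm, K, hK, hzero⟩ := hu
  ⟨hsm.mul hv.1, K, hK, fun x t hx ht => by simp [hzero x t hx ht]⟩

protected theorem sq (hu : Admissible T u) : Admissible T fun x t => u x t ^ 2 := by
  simpa only [_root_.sq] using hu.mul hu

protected theorem sum {u : Fin d → (Fin d → ℝ) → ℝ → ℝ} (hu : ∀ i, Admissible T (u i)) :
    Admissible T fun x t => ∑ i, u i x t := by
  choose hsm K hK hzero using hu
  refine ⟨ContDiff.sum fun i _ => hsm i, ⋃ i, K i, isCompact_iUnion hK, fun x t hx ht => ?_⟩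
  exact Finset.sum_eq_zero fun i _ => hzero i x t (fun hxi => hx (mem_iUnion_of_mem i hxi)) ht

protected theorem spaceDeriv (hu : Admissible T u) (i : Fin d) :
    Admissible T (spaceDeriv i u) := by
  obtain ⟨hsm, K, hK, hzero⟩ := hu
  refine ⟨?_, K, hK, fun x t hx ht => ?_⟩
  · exact (ContDiff.fderiv (f := fun (p : (Fin d → ℝ) × ℝ) y => u y p.2)
      (hsm.comp (contDiff_snd.prodMk (contDiff_snd.comp contDiff_fst))) contDiff_fst
      (by simp)).clm_apply contDiff_const
  · have hlocal : (fun y => u y t) =ᶠ[nhds x] fun _ => 0 := by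
      filter_upwards [hK.isClosed.isOpen_compl.mem_nhds hx] with y hy using hzero y t hy ht
    change fderiv ℝ (fun y => u y t) x (Pi.single i 1) = 0
    simp [hlocal.fderiv_eq]

protected theorem tder (hT : 0 < T) (hu : Admissible T u) : Admissible T (tder u) := by
  obtain ⟨hsm, K, hK, hzero⟩ := hu
  have hsm' : ContDiff ℝ ∞ (uncurry (_root_.tder u)) :=
    (ContDiff.fderiv (f := fun (p : (Fin d → ℝ) × ℝ) s => u p.1 s)
      (hsm.comp ((contDiff_fst.comp contDiff_fst).prodMk contDiff_snd)) contDiff_snd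
      (by simp)).clm_apply contDiff_const
  refine ⟨hsm', K, hK, fun x t hx ht => ?_⟩
  have hinterior : EqOn (_root_.tder u x) 0 (Ioo 0 T) := fun s hs => by
    have hlocal : u x =ᶠ[nhds s] fun _ => 0 := by
      filter_upwards [isOpen_Ioo.mem_nhds hs] with r hr using hzero x r hx (Ioo_subset_Icc_self hr)
    simp [_root_.tder, hlocal.deriv_eq]
  have hcont : Continuous (_root_.tder u x) := hsm'.continuous.comp (Continuous.prodMk_right x)
  exact hinterior.closure hcont continuous_zero (by rwa [closure_Ioo hT.ne])

protected theorem lap (hu : Admissible T u) : Admissible T (lap u) :=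
  Admissible.sum fun i => (hu.spaceDeriv i).spaceDeriv i

protected theorem grad2 (hu : Admissible T u) : Admissible T (grad2 u) :=
  Admissible.sum fun i => (hu.spaceDeriv i).sq

theorem hasDerivAt_integral (hu : Admissible T u) (ht : t ∈ Ioo 0 T) :
    HasDerivAt (fun s => ∫ x, u x s) (∫ x, tder u x t) t := by
  have hu' := hu.tder (ht.1.trans ht.2)
  obtain ⟨-, K, hK, hzero⟩ := id hu
  have hmem : ∀ᶠ s in nhds t, s ∈ Icc 0 T := Icc_mem_nhds ht.1 ht.2
  have houtside (x : Fin d → ℝ) (hx : x ∉ K) : tder u x t = 0 := by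
    have hlocal : u x =ᶠ[nhds t] fun _ => 0 := hmem.mono fun s hs => hzero x s hx hs
    simp [_root_.tder, hlocal.deriv_eq]
  rw [← setIntegral_eq_integral_of_forall_compl_eq_zero houtside]
  refine (hasDerivAt_setIntegral_of_isCompact hK (fun s => (hu.contDiff_slice s).continuous)
    hu'.contDiff_uncurry.continuous hu.hasDerivAt_tder t).congr_of_eventuallyEq
    (hmem.mono fun s hs => ?_)
  exact (setIntegral_eq_integral_of_forall_compl_eq_zero fun x hx => hzero x s hx hs).symm

end Admissible

section Energy

variable {d : ℕ} {T t : ℝ} {u : (Fin d → ℝ) → ℝ → ℝ}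

/-- The squared spatial `L²` norm `‖u(·,t)‖²`. -/
noncomputable def l2Sq (u : (Fin d → ℝ) → ℝ → ℝ) (t : ℝ) : ℝ :=
  ∫ x, u x t ^ 2

/-- The Dirichlet integral `‖∇u(·,t)‖²`. -/
noncomputable def dirichlet (u : (Fin d → ℝ) → ℝ → ℝ) (t : ℝ) : ℝ :=
  ∫ x, grad2 u x t

/-- The operator `∂ₜ + σΔ`: the backward heat operator for `σ = 1`, the forward one for
`σ = -1`. -/
noncomputable def heatOp (σ : ℝ) (u : (Fin d → ℝ) → ℝ → ℝ) : (Fin d → ℝ) → ℝ → ℝ :=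
  fun x t => tder u x t + σ * lap u x t

/-- The energy `w (σ‖∇u‖² + (q + μ)‖u‖²)`, with weight `w` of logarithmic derivative `2q`. -/
noncomputable def weightedEnergy (w q : ℝ → ℝ) (σ μ : ℝ) (u : (Fin d → ℝ) → ℝ → ℝ) (t : ℝ) : ℝ :=
  w t * (σ * dirichlet u t + (q t + μ) * l2Sq u t)

theorem l2Sq_nonneg (u : (Fin d → ℝ) → ℝ → ℝ) (t : ℝ) : 0 ≤ l2Sq u t :=
  integral_nonneg fun _ => sq_nonneg _

theorem dirichlet_nonneg (u : (Fin d → ℝ) → ℝ → ℝ) (t : ℝ) : 0 ≤ dirichlet u t :=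
  integral_nonneg fun x => grad2_nonneg u x t

namespace Admissible

theorem hasDerivAt_l2Sq (hu : Admissible T u) (ht : t ∈ Ioo 0 T) :
    HasDerivAt (l2Sq u) (2 * ∫ x, u x t * tder u x t) t := by
  have hsq (x : Fin d → ℝ) : tder (fun x t => u x t ^ 2) x t = 2 * (u x t * tder u x t) := by
    have h := ((hu.hasDerivAt_tder x t).fun_pow 2).deriv
    rw [_root_.tder, h]
    ring
  have h := hu.sq.hasDerivAt_integral ht
  simp only [hsq, integral_const_mul] at h
  exact h

theorem integral_mul_lap (hu : Admissible T u) (ht : t ∈ Icc 0 T) :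
    ∫ x, u x t * lap u x t = -dirichlet u t := by
  have hsm := hu.contDiff_slice t
  have hgreen := integral_mul_sum_spd_spd (hsm.of_le ENat.LEInfty.out)
    (hu.hasCompactSupport ht) (hsm.of_le ENat.LEInfty.out)
  simpa only [dirichlet, _root_.grad2, _root_.lap, pdij, ← _root_.sq] using hgreen

theorem hasDerivAt_dirichlet (hu : Admissible T u) (ht : t ∈ Ioo 0 T) :
    HasDerivAt (dirichlet u) (-2 * ∫ x, tder u x t * lap u x t) t := by
  have hu' := hu.tder (ht.1.trans ht.2)
  have hgrad (x : Fin d → ℝ) : tder (grad2 u) x t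
      = 2 * ∑ i, spd i (fun y => tder u y t) x * spd i (fun y => u y t) x := by
    have hsum := HasDerivAt.fun_sum fun i (_ : i ∈ Finset.univ) =>
      ((hu.spaceDeriv i).hasDerivAt_tder x t).pow 2
    rw [Finset.mul_sum]
    refine hsum.deriv.trans (Finset.sum_congr rfl fun i _ => ?_)
    rw [tder_spaceDeriv_comm (hu.contDiff_uncurry.of_le ENat.LEInfty.out)]
    simp only [_root_.spaceDeriv]
    ring
  have hgreen := integral_mul_sum_spd_spd ((hu'.contDiff_slice t).of_le ENat.LEInfty.out)
    (hu'.hasCompactSupport (Ioo_subset_Icc_self ht)) ((hu.contDiff_slice t).of_le ENat.LEInfty.out)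
  have hvalue : ∫ x, tder (grad2 u) x t = -2 * ∫ x, tder u x t * lap u x t := by
    simp only [hgrad, integral_const_mul, _root_.lap, pdij]
    linarith
  exact hvalue ▸ hu.grad2.hasDerivAt_integral ht

theorem l2Sq_linearCombination (hu : Admissible T u) (hT : 0 < T) (ht : t ∈ Icc 0 T)
    (a b c : ℝ) :
    l2Sq (fun x t => a * u x t + b * tder u x t + c * lap u x t) t
      = a ^ 2 * l2Sq u t + b ^ 2 * l2Sq (tder u) t + c ^ 2 * l2Sq (lap u) t
        + 2 * a * b * (∫ x, u x t * tder u x t) - 2 * a * c * dirichlet u t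
        + 2 * b * c * ∫ x, tder u x t * lap u x t := by
  have hu' := hu.tder hT
  have hN := (hu.sq.integrable ht).const_mul (a ^ 2)
  have hA := (hu'.sq.integrable ht).const_mul (b ^ 2)
  have hB := (hu.lap.sq.integrable ht).const_mul (c ^ 2)
  have hP := ((hu.mul hu').integrable ht).const_mul (2 * a * b)
  have hG := ((hu.mul hu.lap).integrable ht).const_mul (2 * a * c)
  have hR := ((hu'.mul hu.lap).integrable ht).const_mul (2 * b * c)
  have hexpand (x : Fin d → ℝ) : (a * u x t + b * tder u x t + c * lap u x t) ^ 2
      = a ^ 2 * u x t ^ 2 + b ^ 2 * tder u x t ^ 2 + c ^ 2 * lap u x t ^ 2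
        + 2 * a * b * (u x t * tder u x t) + 2 * a * c * (u x t * lap u x t)
        + 2 * b * c * (tder u x t * lap u x t) := by ring
  simp only [l2Sq, hexpand]
  rw [integral_add ((((hN.fun_add hA).fun_add hB).fun_add hP).fun_add hG) hR,
    integral_add (((hN.fun_add hA).fun_add hB).fun_add hP) hG,
    integral_add ((hN.fun_add hA).fun_add hB) hP,
    integral_add (hN.fun_add hA) hB, integral_add hN hA]
  simp only [integral_const_mul, hu.integral_mul_lap ht]
  ring

theorem l2Sq_heatOp {σ : ℝ} (hu : Admissible T u) (hT : 0 < T) (ht : t ∈ Icc 0 T)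
    (hσ : σ ^ 2 = 1) :
    l2Sq (heatOp σ u) t = l2Sq (tder u) t + l2Sq (lap u) t
      + 2 * σ * ∫ x, tder u x t * lap u x t := by
  have hop : heatOp σ u = fun x t => 0 * u x t + 1 * tder u x t + σ * lap u x t := by
    funext x t
    simp only [heatOp, zero_mul, zero_add, one_mul]
  rw [hop, hu.l2Sq_linearCombination hT ht, hσ]
  ring

theorem hasDerivAt_weightedEnergy {w q : ℝ → ℝ} {q' : ℝ} (hu : Admissible T u)
    (ht : t ∈ Ioo 0 T) (hw : HasDerivAt w (2 * q t * w t) t) (hq : HasDerivAt q q' t)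
    (σ μ : ℝ) :
    HasDerivAt (weightedEnergy w q σ μ u)
      (w t * (2 * q t * (σ * dirichlet u t + (q t + μ) * l2Sq u t) + q' * l2Sq u t
        + 2 * (q t + μ) * (∫ x, u x t * tder u x t)
        - 2 * σ * ∫ x, tder u x t * lap u x t)) t := by
  have h := hw.mul (((hu.hasDerivAt_dirichlet ht).const_mul σ).add
    ((hq.add_const μ).mul (hu.hasDerivAt_l2Sq ht)))
  refine h.congr_deriv ?_
  simp only [Pi.add_apply, Pi.mul_apply]
  ring

theorem le_deriv_weightedEnergy {w q : ℝ → ℝ} {q' σ ε : ℝ} (hu : Admissible T u)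
    (ht : t ∈ Ioo 0 T) (hw : HasDerivAt w (2 * q t * w t) t) (hw₀ : 0 ≤ w t)
    (hq : HasDerivAt q q' t) (hσ : σ ^ 2 = 1) (hε₀ : 0 ≤ ε) (hε₁ : ε ≤ 1) (μ : ℝ) :
    w t * (ε / 2 * (l2Sq (tder u) t + l2Sq (lap u) t)
        + (q' + 2 * μ * q t - 2 * μ ^ 2 - 2 * ε * q t ^ 2) * l2Sq u t
        + 2 * μ * σ * dirichlet u t - 3 / 2 * l2Sq (heatOp σ u) t)
      ≤ deriv (weightedEnergy w q σ μ u) t := by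
  have hT := ht.1.trans ht.2
  have hquad := hu.l2Sq_linearCombination hT (Ioo_subset_Icc_self ht)
  have hnonneg (a b c : ℝ) := (l2Sq_nonneg _ t).trans_eq (hquad a b c)
  -- `½‖∂ₜu + 2qu‖²` has the same cross term as `‖∂ₜu + qu‖²` but uses only half of `‖∂ₜu‖²`, and
  -- likewise for `Δu`: using it with weight `ε` retains `ε / 2 * (‖∂ₜu‖² + ‖Δu‖²)`.
  have hsquares := mul_nonneg (sub_nonneg.2 hε₁)
    (add_nonneg (hnonneg (q t) 1 0) (hnonneg (-(σ * q t)) 0 1))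
  have hregular := mul_nonneg hε₀
    (add_nonneg (hnonneg (2 * q t) 1 0) (hnonneg (-(2 * σ * q t)) 0 1))
  have hresidual := hnonneg (2 * μ) 1 σ
  rw [(hu.hasDerivAt_weightedEnergy ht hw hq σ μ).deriv]
  refine mul_le_mul_of_nonneg_left ?_ hw₀
  rw [hu.l2Sq_heatOp hT (Ioo_subset_Icc_self ht) hσ]
  linear_combination hsquares + 1 / 2 * hregular + 1 / 2 * hresidual
    + ((1 + ε) * q t ^ 2 * l2Sq u t + 1 / 2 * l2Sq (lap u) t) * hσ

end Admissible

end Energy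

section Carleman

/-- The exponent `sφ(t) = s e^{λt}` of the Carleman weight `e^{2sφ}`. -/
noncomputable def phase (s lam t : ℝ) : ℝ :=
  s * exp (lam * t)

/-- The quantity `‖∂ₜu‖² + ‖Δu‖² + λk‖∇u‖² + λ²k²‖u‖²` estimated by the Carleman inequality at a
time where the phase takes the value `k`. -/
noncomputable def carlemanForm {d : ℕ} (lam k : ℝ) (u : (Fin d → ℝ) → ℝ → ℝ) (t : ℝ) : ℝ :=
  l2Sq (tder u) t + l2Sq (lap u) t + lam * k * dirichlet u t + lam ^ 2 * k ^ 2 * l2Sq u t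

/-- The energy with weight `k^τ e^{2k}`, where `k = sφ`, whose derivative controls `carlemanForm`
modulo `∂ₜu + σΔu`. The shift `σλ/4` trades part of the positivity of `‖u‖²` for positivity of
`‖∇u‖²`. -/
noncomputable def carlemanEnergy {d : ℕ} (s lam τ σ : ℝ) (u : (Fin d → ℝ) → ℝ → ℝ) : ℝ → ℝ :=
  weightedEnergy (fun t => phase s lam t ^ τ * exp (2 * phase s lam t))
    (fun t => lam * phase s lam t + τ * lam / 2) σ (σ * lam / 4) u

variable {d : ℕ} {T s lam τ σ k t ρ₀ C₀ c : ℝ} {u v : (Fin d → ℝ) → ℝ → ℝ}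

theorem carlemanForm_nonneg (hlam : 0 ≤ lam) (hk : 0 ≤ k) : 0 ≤ carlemanForm lam k u t := by
  have := l2Sq_nonneg u t
  have := dirichlet_nonneg u t
  have := l2Sq_nonneg (tder u) t
  have := l2Sq_nonneg (lap u) t
  unfold carlemanForm
  positivity

theorem one_le_phase (hs : 1 ≤ s) (hlam : 0 ≤ lam) (ht : 0 ≤ t) : 1 ≤ phase s lam t :=
  one_le_mul_of_one_le_of_one_le hs (one_le_exp (mul_nonneg hlam ht))

theorem hasDerivAt_phase (s lam t : ℝ) : HasDerivAt (phase s lam) (lam * phase s lam t) t := by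
  refine (((hasDerivAt_id t).const_mul lam).exp.const_mul s).congr_deriv ?_
  simp only [phase, id_eq]
  ring

theorem hasDerivAt_carlemanWeight (hk : phase s lam t ≠ 0) (τ : ℝ) :
    HasDerivAt (fun t => phase s lam t ^ τ * exp (2 * phase s lam t))
      (2 * (lam * phase s lam t + τ * lam / 2)
        * (phase s lam t ^ τ * exp (2 * phase s lam t))) t := by
  have hphase := hasDerivAt_phase s lam t
  refine ((hphase.rpow_const (p := τ) (Or.inl hk)).mul (hphase.const_mul 2).exp).congr_deriv ?_
  rw [rpow_sub_one hk]
  field_simp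
  ring

/-- The right-hand side is the coefficient of `‖u‖²` in `Admissible.le_deriv_weightedEnergy` for
`carlemanEnergy`, at phase `k` and with `ε = 1 / (72 k)`. -/
theorem le_carleman_l2Sq_coefficient (lam : ℝ) (hk : 1 ≤ k) (hτ : |τ| ≤ k) (hσ : σ ^ 2 = 1) :
    lam ^ 2 * k / 16 ≤ lam * (lam * k) + 2 * (σ * lam / 4) * (lam * k + τ * lam / 2)
      - 2 * (σ * lam / 4) ^ 2 - 2 * (1 / (72 * k)) * (lam * k + τ * lam / 2) ^ 2 := by
  obtain ⟨hτ₁, hτ₂⟩ := abs_le.1 hτ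
  have : 0 < k := by linarith
  have hsign : -(3 / 2) * k ≤ σ * (k + τ / 2) := by
    rcases sq_eq_one_iff.1 hσ with rfl | rfl <;> linarith
  have hsquare : 1 / (36 * k) * (k + τ / 2) ^ 2 ≤ k / 16 := by
    rw [div_mul_eq_mul_div, div_le_iff₀ (by positivity)]
    nlinarith
  have hcoeff : k / 16 ≤ k + σ / 2 * (k + τ / 2) - 1 / 8 - 1 / (36 * k) * (k + τ / 2) ^ 2 := by
    linarith
  calc lam ^ 2 * k / 16 = lam ^ 2 * (k / 16) := by ring
    _ ≤ lam ^ 2 * (k + σ / 2 * (k + τ / 2) - 1 / 8 - 1 / (36 * k) * (k + τ / 2) ^ 2) := by gcongr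
    _ = _ := by linear_combination 1 / 8 * lam ^ 2 * hσ

theorem Admissible.carlemanForm_le_deriv_carlemanEnergy (hu : Admissible T u) (ht : t ∈ Ioo 0 T)
    (hlam : 0 ≤ lam) (hk : 1 ≤ phase s lam t) (hτ : |τ| ≤ phase s lam t) (hσ : σ ^ 2 = 1) :
    phase s lam t ^ τ * exp (2 * phase s lam t)
        * (carlemanForm lam (phase s lam t) u t / (144 * phase s lam t)
          - 3 / 2 * l2Sq (heatOp σ u) t)
      ≤ deriv (carlemanEnergy s lam τ σ u) t := by
  have hk₀ : 0 < phase s lam t := by linarith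
  have hweight : 0 ≤ phase s lam t ^ τ * exp (2 * phase s lam t) := by positivity
  have henergy := hu.le_deriv_weightedEnergy ht (hasDerivAt_carlemanWeight hk₀.ne' τ) hweight
    (((hasDerivAt_phase s lam t).const_mul lam).add_const (τ * lam / 2)) hσ
    (ε := 1 / (72 * phase s lam t)) (by positivity)
    (by rw [div_le_one (by positivity)]; linarith) (σ * lam / 4)
  refine le_trans (mul_le_mul_of_nonneg_left ?_ hweight) henergy
  have hcoeff := mul_le_mul_of_nonneg_right (le_carleman_l2Sq_coefficient lam hk hτ hσ)
    (l2Sq_nonneg u t)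
  have hN := mul_nonneg (mul_nonneg (sq_nonneg lam) hk₀.le) (l2Sq_nonneg u t)
  have hG := mul_nonneg hlam (dirichlet_nonneg u t)
  have hform : carlemanForm lam (phase s lam t) u t / (144 * phase s lam t)
      = 1 / (72 * phase s lam t) / 2 * (l2Sq (tder u) t + l2Sq (lap u) t)
        + lam * dirichlet u t / 144 + lam ^ 2 * phase s lam t * l2Sq u t / 144 := by
    rw [carlemanForm]
    field_simp
    ring
  rw [hform]
  linear_combination hcoeff + 71 / 144 * hG + 1 / 18 * hN - 1 / 2 * lam * dirichlet u t * hσ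

theorem l2Sq_le_integral {g : (Fin d → ℝ) → ℝ} (hg : Integrable g) (h : ∀ x, u x t ^ 2 ≤ g x) :
    l2Sq u t ≤ ∫ x, g x :=
  integral_mono_of_nonneg (Filter.Eventually.of_forall fun _ => sq_nonneg _) hg
    (Filter.Eventually.of_forall h)

theorem heatOp_one_sq_le {x : Fin d → ℝ} (hc : 3 * C₀ ^ 2 ≤ c)
    (h : |tder u x t + lap u x t| ≤ C₀ * (|u x t| + gradNorm u x t + |v x t|)) :
    heatOp 1 u x t ^ 2 ≤ c * (u x t ^ 2 + grad2 u x t + v x t ^ 2) := by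
  have hmean (p q r : ℝ) : (p + q + r) ^ 2 ≤ 3 * (p ^ 2 + q ^ 2 + r ^ 2) := by
    linarith [sq_nonneg (p - q), sq_nonneg (p - r), sq_nonneg (q - r)]
  have := grad2_nonneg u x t
  calc heatOp 1 u x t ^ 2 = |tder u x t + lap u x t| ^ 2 := by rw [heatOp, one_mul, sq_abs]
    _ ≤ (C₀ * (|u x t| + gradNorm u x t + |v x t|)) ^ 2 := by gcongr
    _ = C₀ ^ 2 * (|u x t| + gradNorm u x t + |v x t|) ^ 2 := mul_pow ..
    _ ≤ C₀ ^ 2 * (3 * (|u x t| ^ 2 + gradNorm u x t ^ 2 + |v x t| ^ 2)) := by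
      gcongr; exact hmean ..
    _ = 3 * C₀ ^ 2 * (u x t ^ 2 + grad2 u x t + v x t ^ 2) := by
      rw [sq_abs, sq_abs, gradNorm_sq]; ring
    _ ≤ c * (u x t ^ 2 + grad2 u x t + v x t ^ 2) := by gcongr

theorem sq_le_of_abs_le_gradNorm {x : Fin d → ℝ} {r : ℝ}
    (h : |r| ≤ C₀ * (|u x t| + |v x t| + gradNorm u x t + gradNorm v x t)) :
    r ^ 2 ≤ 4 * C₀ ^ 2 * (u x t ^ 2 + grad2 u x t + v x t ^ 2 + grad2 v x t) := by
  have hmean (a b p q : ℝ) : (a + b + p + q) ^ 2 ≤ 4 * (a ^ 2 + b ^ 2 + p ^ 2 + q ^ 2) := by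
    linarith [sq_nonneg (a + b - p - q), sq_nonneg (a - b + p - q), sq_nonneg (a - b - p + q)]
  calc r ^ 2 = |r| ^ 2 := (sq_abs r).symm
    _ ≤ (C₀ * (|u x t| + |v x t| + gradNorm u x t + gradNorm v x t)) ^ 2 := by gcongr
    _ = C₀ ^ 2 * (|u x t| + |v x t| + gradNorm u x t + gradNorm v x t) ^ 2 := mul_pow ..
    _ ≤ C₀ ^ 2 * (4 * (|u x t| ^ 2 + |v x t| ^ 2 + gradNorm u x t ^ 2
        + gradNorm v x t ^ 2)) := by gcongr; exact hmean ..
    _ = _ := by rw [sq_abs, sq_abs, gradNorm_sq, gradNorm_sq]; ring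

theorem heatOp_neg_one_sq_le {x : Fin d → ℝ} (hcC : 8 * C₀ ^ 2 ≤ c) (hcρ : 2 * ρ₀ ^ 2 ≤ c)
    (h : |tder v x t - lap v x t - ρ₀ * lap u x t|
      ≤ C₀ * (|u x t| + |v x t| + gradNorm u x t + gradNorm v x t)) :
    heatOp (-1) v x t ^ 2
      ≤ c * (lap u x t ^ 2 + (u x t ^ 2 + grad2 u x t + v x t ^ 2 + grad2 v x t)) := by
  have hresidual := sq_le_of_abs_le_gradNorm h
  have := grad2_nonneg u x t
  have := grad2_nonneg v x t
  calc heatOp (-1) v x t ^ 2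
      = (ρ₀ * lap u x t + (tder v x t - lap v x t - ρ₀ * lap u x t)) ^ 2 := by
        rw [heatOp]; ring
    _ ≤ 2 * ((ρ₀ * lap u x t) ^ 2 + (tder v x t - lap v x t - ρ₀ * lap u x t) ^ 2) := add_sq_le
    _ ≤ 2 * ρ₀ ^ 2 * lap u x t ^ 2
        + 8 * C₀ ^ 2 * (u x t ^ 2 + grad2 u x t + v x t ^ 2 + grad2 v x t) := by
      linear_combination 2 * hresidual
    _ ≤ c * lap u x t ^ 2 + c * (u x t ^ 2 + grad2 u x t + v x t ^ 2 + grad2 v x t) := by gcongr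
    _ = _ := (mul_add ..).symm

namespace Admissible

theorem l2Sq_heatOp_one_le (hu : Admissible T u) (hv : Admissible T v) (ht : t ∈ Icc 0 T)
    (hc : 3 * C₀ ^ 2 ≤ c)
    (h : ∀ x, |tder u x t + lap u x t| ≤ C₀ * (|u x t| + gradNorm u x t + |v x t|)) :
    l2Sq (heatOp 1 u) t ≤ c * (l2Sq u t + dirichlet u t + l2Sq v t) := by
  have hN := hu.sq.integrable ht
  have hG := hu.grad2.integrable ht
  have hn := hv.sq.integrable ht
  refine (l2Sq_le_integral (((hN.fun_add hG).fun_add hn).const_mul c)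
    fun x => heatOp_one_sq_le hc (h x)).trans_eq ?_
  rw [integral_const_mul, integral_add (hN.fun_add hG) hn, integral_add hN hG]
  rfl

theorem l2Sq_heatOp_neg_one_le (hu : Admissible T u) (hv : Admissible T v) (ht : t ∈ Icc 0 T)
    (hcC : 8 * C₀ ^ 2 ≤ c) (hcρ : 2 * ρ₀ ^ 2 ≤ c)
    (h : ∀ x, |tder v x t - lap v x t - ρ₀ * lap u x t|
      ≤ C₀ * (|u x t| + |v x t| + gradNorm u x t + gradNorm v x t)) :
    l2Sq (heatOp (-1) v) t
      ≤ c * (l2Sq (lap u) t + (l2Sq u t + dirichlet u t + l2Sq v t + dirichlet v t)) := by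
  have hB := hu.lap.sq.integrable ht
  have hN := hu.sq.integrable ht
  have hG := hu.grad2.integrable ht
  have hn := hv.sq.integrable ht
  have hg := hv.grad2.integrable ht
  have hlower := ((hN.fun_add hG).fun_add hn).fun_add hg
  refine (l2Sq_le_integral ((hB.fun_add hlower).const_mul c)
    fun x => heatOp_neg_one_sq_le hcC hcρ (h x)).trans_eq ?_
  rw [integral_const_mul, integral_add hB hlower, integral_add ((hN.fun_add hG).fun_add hn) hg,
    integral_add (hN.fun_add hG) hn, integral_add hN hG]
  rfl

end Admissible

/-- The bulk density of the coupled estimate: the form of `u`, plus that of `v` with one power of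
the phase less. -/
noncomputable def couplingForm (lam k : ℝ) (u v : (Fin d → ℝ) → ℝ → ℝ) (t : ℝ) : ℝ :=
  carlemanForm lam k u t + carlemanForm lam k v t / k

/-- The energy of the coupled system; the factor in front of the energy of `u` is chosen so that
its gain `‖Δu‖²` absorbs the source `ρ₀Δu` of the equation for `v`. -/
noncomputable def couplingEnergy (c s lam : ℝ) (u v : (Fin d → ℝ) → ℝ → ℝ) (t : ℝ) : ℝ :=
  (216 * c + 1) * carlemanEnergy s lam 1 1 u t + carlemanEnergy s lam 0 (-1) v t

theorem couplingForm_nonneg (hlam : 0 ≤ lam) (hk : 0 ≤ k) : 0 ≤ couplingForm lam k u v t :=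
  add_nonneg (carlemanForm_nonneg hlam hk) (div_nonneg (carlemanForm_nonneg hlam hk) hk)

theorem couplingForm_eq (hk : k ≠ 0) :
    couplingForm lam k u v t = l2Sq (tder u) t + l2Sq (lap u) t + lam * k * dirichlet u t
      + lam ^ 2 * k ^ 2 * l2Sq u t + (l2Sq (tder v) t + l2Sq (lap v) t) / k
      + lam * dirichlet v t + lam ^ 2 * k * l2Sq v t := by
  rw [couplingForm, carlemanForm, carlemanForm]
  field_simp
  ring

theorem lowerOrder_le_couplingForm (hlam : 1 ≤ lam) (hk : 1 ≤ k) :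
    k * (l2Sq u t + dirichlet u t + l2Sq v t) + dirichlet v t ≤ couplingForm lam k u v t / lam := by
  have hlam₀ : 0 < lam := by linarith
  have hk₀ : 0 < k := by linarith
  have hA := l2Sq_nonneg (tder u) t
  have hB := l2Sq_nonneg (lap u) t
  have hv : 0 ≤ (l2Sq (tder v) t + l2Sq (lap v) t) / k :=
    div_nonneg (add_nonneg (l2Sq_nonneg _ t) (l2Sq_nonneg _ t)) hk₀.le
  have hN := mul_nonneg (mul_nonneg (mul_pos hlam₀ hk₀).le
    (sub_nonneg.2 (one_le_mul_of_one_le_of_one_le hlam hk))) (l2Sq_nonneg u t)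
  have hn := mul_nonneg (mul_nonneg (mul_pos hlam₀ hk₀).le (sub_nonneg.2 hlam)) (l2Sq_nonneg v t)
  rw [le_div_iff₀ hlam₀, couplingForm_eq hk₀.ne']
  linear_combination hA + hB + hv + hN + hn

theorem l2Sq_lap_le_carlemanForm (hlam : 0 ≤ lam) (hk : 0 ≤ k) :
    l2Sq (lap u) t ≤ carlemanForm lam k u t := by
  have := l2Sq_nonneg u t
  have := dirichlet_nonneg u t
  have := l2Sq_nonneg (tder u) t
  rw [carlemanForm, add_assoc, add_right_comm]
  exact le_add_of_nonneg_left (by positivity)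

theorem couplingForm_le_of_residual_le {F F' : ℝ} (hc : 0 ≤ c) (hk : 1 ≤ k)
    (hlam : 1 + 432 * c * (216 * c + 2) ≤ lam)
    (hF : F ≤ c * (l2Sq u t + dirichlet u t + l2Sq v t))
    (hF' : F' ≤ c * (l2Sq (lap u) t + (l2Sq u t + dirichlet u t + l2Sq v t + dirichlet v t))) :
    couplingForm lam k u v t / 288
      ≤ (216 * c + 1) * (k * (carlemanForm lam k u t / (144 * k) - 3 / 2 * F))
        + (carlemanForm lam k v t / (144 * k) - 3 / 2 * F') := by
  have hlam₁ : 1 ≤ lam := by linarith [show 0 ≤ 432 * c * (216 * c + 2) by positivity]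
  have hlam₀ : 0 < lam := by linarith
  have hk₀ : 0 < k := by linarith
  have hN := add_nonneg (add_nonneg (l2Sq_nonneg u t) (dirichlet_nonneg u t)) (l2Sq_nonneg v t)
  have hlower := lowerOrder_le_couplingForm (u := u) (v := v) (t := t) hlam₁ hk
  have hkF : k * F ≤ c * (couplingForm lam k u v t / lam) :=
    calc k * F ≤ k * (c * (l2Sq u t + dirichlet u t + l2Sq v t)) := by gcongr
      _ = c * (k * (l2Sq u t + dirichlet u t + l2Sq v t)) := by ring
      _ ≤ c * (couplingForm lam k u v t / lam) := by
        gcongr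
        linarith [dirichlet_nonneg v t]
  have hF'_form : F' ≤ c * (carlemanForm lam k u t + couplingForm lam k u v t / lam) := by
    refine hF'.trans ?_
    gcongr
    · exact l2Sq_lap_le_carlemanForm hlam₀.le hk₀.le
    · linarith [le_mul_of_one_le_left hN hk]
  have habsorb : 432 * c * (216 * c + 2) * (couplingForm lam k u v t / lam)
      ≤ couplingForm lam k u v t := by
    have hform : 0 ≤ couplingForm lam k u v t := couplingForm_nonneg hlam₀.le hk₀.le
    rw [← mul_div_assoc, div_le_iff₀ hlam₀, mul_comm (couplingForm lam k u v t)]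
    gcongr
    linarith
  have hu_form : k * (carlemanForm lam k u t / (144 * k) - 3 / 2 * F)
      = carlemanForm lam k u t / 144 - 3 / 2 * (k * F) := by field_simp
  have hv_form : carlemanForm lam k v t / (144 * k)
      = (couplingForm lam k u v t - carlemanForm lam k u t) / 144 := by
    rw [couplingForm]
    field_simp
    ring
  rw [hu_form, hv_form]
  linear_combination 3 / 2 * (216 * c + 1) * hkF + 3 / 2 * hF'_form + 1 / 288 * habsorb

namespace Admissible

theorem differentiableAt_carlemanEnergy (hu : Admissible T u) (ht : t ∈ Ioo 0 T)
    (hk : phase s lam t ≠ 0) (τ σ : ℝ) : DifferentiableAt ℝ (carlemanEnergy s lam τ σ u) t :=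
  (hu.hasDerivAt_weightedEnergy ht (hasDerivAt_carlemanWeight hk τ)
    (((hasDerivAt_phase s lam t).const_mul lam).add_const (τ * lam / 2)) σ _).differentiableAt

theorem hasDerivAt_couplingEnergy (hu : Admissible T u) (hv : Admissible T v) (ht : t ∈ Ioo 0 T)
    (hk : phase s lam t ≠ 0) (c : ℝ) :
    HasDerivAt (couplingEnergy c s lam u v)
      ((216 * c + 1) * deriv (carlemanEnergy s lam 1 1 u) t
        + deriv (carlemanEnergy s lam 0 (-1) v) t) t :=
  ((hu.differentiableAt_carlemanEnergy ht hk 1 1).hasDerivAt.const_mul _).add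
    (hv.differentiableAt_carlemanEnergy ht hk 0 (-1)).hasDerivAt

theorem couplingForm_le_deriv_couplingEnergy (hu : Admissible T u)
    (hv : Admissible T v) (ht : t ∈ Ioo 0 T) (hs : 1 ≤ s)
    (hc : 0 ≤ c) (hlam : 1 + 432 * c * (216 * c + 2) ≤ lam)
    (hFu : l2Sq (heatOp 1 u) t ≤ c * (l2Sq u t + dirichlet u t + l2Sq v t))
    (hFv : l2Sq (heatOp (-1) v) t ≤ c * (l2Sq (lap u) t
      + (l2Sq u t + dirichlet u t + l2Sq v t + dirichlet v t))) :
    exp (2 * phase s lam t) * couplingForm lam (phase s lam t) u v t / 288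
      ≤ deriv (couplingEnergy c s lam u v) t := by
  have hlam₀ : 0 ≤ lam := by linarith [show 0 ≤ 432 * c * (216 * c + 2) by positivity]
  have hk := one_le_phase hs hlam₀ ht.1.le
  have hk₀ : 0 < phase s lam t := by linarith
  have hu_energy := hu.carlemanForm_le_deriv_carlemanEnergy ht hlam₀ hk
    (τ := 1) (by rwa [abs_one]) (one_pow 2)
  have hv_energy := hv.carlemanForm_le_deriv_carlemanEnergy ht hlam₀ hk
    (τ := 0) (by rw [abs_zero]; exact hk₀.le) neg_one_sq
  have habsorb := mul_le_mul_of_nonneg_left (couplingForm_le_of_residual_le hc hk hlam hFu hFv)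
    (exp_nonneg (2 * phase s lam t))
  rw [rpow_one] at hu_energy
  rw [rpow_zero, one_mul] at hv_energy
  rw [(hu.hasDerivAt_couplingEnergy hv ht hk₀.ne' c).deriv]
  linear_combination habsorb + (216 * c + 1) * hu_energy + hv_energy

end Admissible

theorem continuous_phase (s lam : ℝ) : Continuous (phase s lam) := by
  unfold phase
  fun_prop

theorem le_couplingEnergy (hc : 0 ≤ c) (hlam : 0 ≤ lam) (hk : 1 ≤ phase s lam t) :
    exp (2 * phase s lam t) * (phase s lam t * dirichlet u t
        + lam * phase s lam t ^ 2 * l2Sq u t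
        + 3 / 4 * (lam * phase s lam t * l2Sq v t) - dirichlet v t)
      ≤ couplingEnergy c s lam u v t := by
  have hG := dirichlet_nonneg u t
  have hN := l2Sq_nonneg u t
  have hn := mul_nonneg (mul_nonneg hlam (sub_nonneg.2 hk)) (l2Sq_nonneg v t)
  simp only [couplingEnergy, carlemanEnergy, weightedEnergy, rpow_one, rpow_zero, one_mul]
  set k := phase s lam t
  have : 0 < k := by linarith
  have hprincipal : 0 ≤ 216 * c * (k * (dirichlet u t + (lam * k + 3 / 4 * lam) * l2Sq u t))
      + 3 / 4 * (k * lam * l2Sq u t) := by positivity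
  linear_combination exp (2 * k) * hprincipal + 1 / 4 * exp (2 * k) * hn

theorem couplingEnergy_le (hc : 0 ≤ c) (hlam : 1 ≤ lam) (hk : 1 ≤ phase s lam t) :
    couplingEnergy c s lam u v t ≤ exp (2 * phase s lam t)
      * (2 * (216 * c + 1) * (lam ^ 2 * phase s lam t ^ 2 * l2Sq u t
          + phase s lam t * dirichlet u t)
        + lam * phase s lam t * l2Sq v t - dirichlet v t) := by
  simp only [couplingEnergy, carlemanEnergy, weightedEnergy, rpow_one, rpow_zero, one_mul]
  set k := phase s lam t
  have hk₀ : 0 < k := by linarith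
  have hlam₀ : 0 < lam := by linarith
  have hM : 0 ≤ 216 * c + 1 := by positivity
  have hcoeff : k * (lam * k + 3 / 4 * lam) ≤ 2 * (lam ^ 2 * k ^ 2) := by
    have hlam_gain := mul_nonneg (mul_pos hlam₀ (sq_pos_of_pos hk₀)).le (sub_nonneg.2 hlam)
    have hk_gain := mul_nonneg (mul_pos hlam₀ hk₀).le (sub_nonneg.2 hk)
    have hrest := mul_nonneg hlam₀.le (sq_nonneg k)
    linear_combination 2 * hlam_gain + 3 / 4 * hk_gain + 1 / 4 * hrest
  have hN := mul_le_mul_of_nonneg_left (mul_le_mul_of_nonneg_right hcoeff (l2Sq_nonneg u t)) hM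
  have hG := mul_nonneg hM (mul_nonneg hk₀.le (dirichlet_nonneg u t))
  have hn := mul_nonneg hlam₀.le (l2Sq_nonneg v t)
  linear_combination exp (2 * k) * hN + exp (2 * k) * hG + 1 / 4 * exp (2 * k) * hn

namespace Admissible

theorem continuousOn_l2Sq (hu : Admissible T u) : ContinuousOn (l2Sq u) (Icc 0 T) :=
  hu.sq.continuousOn_integral

theorem continuousOn_dirichlet (hu : Admissible T u) : ContinuousOn (dirichlet u) (Icc 0 T) :=
  hu.grad2.continuousOn_integral

theorem continuousOn_carlemanForm (hu : Admissible T u) (hT : 0 < T) (s lam : ℝ) :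
    ContinuousOn (fun t => carlemanForm lam (phase s lam t) u t) (Icc 0 T) := by
  have hk := (continuous_phase s lam).continuousOn (s := Icc 0 T)
  have hA := (hu.tder hT).continuousOn_l2Sq
  have hB := hu.lap.continuousOn_l2Sq
  have hG := hu.continuousOn_dirichlet
  have hN := hu.continuousOn_l2Sq
  unfold carlemanForm
  fun_prop

theorem continuousOn_carlemanEnergy (hu : Admissible T u) (hτ : 0 ≤ τ) (s lam σ : ℝ) :
    ContinuousOn (carlemanEnergy s lam τ σ u) (Icc 0 T) := by
  have hk := (continuous_phase s lam).continuousOn (s := Icc 0 T)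
  have := hk.rpow_const (p := τ) fun _ _ => Or.inr hτ
  have hG := hu.continuousOn_dirichlet
  have hN := hu.continuousOn_l2Sq
  unfold carlemanEnergy weightedEnergy
  fun_prop

theorem integral_couplingForm_le (hu : Admissible T u) (hv : Admissible T v) (hT : 0 < T)
    (hs : 1 ≤ s) (hlam : 0 ≤ lam)
    (h : ∀ t ∈ Ioo 0 T, exp (2 * phase s lam t) * couplingForm lam (phase s lam t) u v t / 288
      ≤ deriv (couplingEnergy c s lam u v) t) :
    ∫ t in Ioo 0 T, exp (2 * phase s lam t) * couplingForm lam (phase s lam t) u v t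
      ≤ 288 * (couplingEnergy c s lam u v T - couplingEnergy c s lam u v 0) := by
  have hk (t : ℝ) (ht : t ∈ Icc 0 T) : phase s lam t ≠ 0 :=
    (zero_lt_one.trans_le (one_le_phase hs hlam ht.1)).ne'
  have hphase := (continuous_phase s lam).continuousOn (s := Icc 0 T)
  have hU := hu.continuousOn_carlemanForm hT s lam
  have hV := (hv.continuousOn_carlemanForm hT s lam).div hphase hk
  have hform : ContinuousOn (fun t => exp (2 * phase s lam t)
      * couplingForm lam (phase s lam t) u v t / 288) (Icc 0 T) :=
    ((continuousOn_const.mul hphase).rexp.mul (hU.add hV)).div_const 288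
  have henergy : ContinuousOn (couplingEnergy c s lam u v) (Icc 0 T) :=
    ((hu.continuousOn_carlemanEnergy zero_le_one s lam 1).const_mul _).add
      (hv.continuousOn_carlemanEnergy le_rfl s lam (-1))
  have hftc := intervalIntegral.integral_le_sub_of_hasDeriv_right_of_le hT.le henergy
    (fun t ht => (hu.hasDerivAt_couplingEnergy hv ht
      (hk t (Ioo_subset_Icc_self ht)) c).differentiableAt.hasDerivAt.hasDerivWithinAt)
    hform.integrableOn_Icc h
  rw [intervalIntegral.integral_of_le hT.le, integral_Ioc_eq_integral_Ioo, integral_div] at hftc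
  linarith

end Admissible

theorem Admissible.carleman_coupled (hu : Admissible T u) (hv : Admissible T v)
    (hT : 0 < T) (hs : 1 ≤ s) (hc : 0 ≤ c) (hlam : 1 + 432 * c * (216 * c + 2) ≤ lam)
    (hFu : ∀ t ∈ Ioo 0 T,
      l2Sq (heatOp 1 u) t ≤ c * (l2Sq u t + dirichlet u t + l2Sq v t))
    (hFv : ∀ t ∈ Ioo 0 T, l2Sq (heatOp (-1) v) t
      ≤ c * (l2Sq (lap u) t + (l2Sq u t + dirichlet u t + l2Sq v t + dirichlet v t))) :
    (∫ t in Ioo 0 T, exp (2 * phase s lam t) * couplingForm lam (phase s lam t) u v t)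
        + exp (2 * s) * (lam * s ^ 2 * l2Sq u 0 + s * dirichlet u 0)
        + (exp (2 * s) * (lam * s * l2Sq v 0) + exp (2 * phase s lam T) * dirichlet v T)
      ≤ 576 * (216 * c + 1)
          * (exp (2 * phase s lam T) * (lam * phase s lam T * l2Sq v T)
            + exp (2 * s) * dirichlet v 0)
        + 576 * (216 * c + 1) * (exp (2 * phase s lam T)
          * (lam ^ 2 * phase s lam T ^ 2 * l2Sq u T + phase s lam T * dirichlet u T)) := by
  have hlam₁ : 1 ≤ lam := by linarith [show 0 ≤ 432 * c * (216 * c + 2) by positivity]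
  have hlam₀ : 0 ≤ lam := by linarith
  have hbulk := hu.integral_couplingForm_le hv hT hs hlam₀ fun t ht =>
    hu.couplingForm_le_deriv_couplingEnergy hv ht hs hc hlam (hFu t ht) (hFv t ht)
  have hinitial := le_couplingEnergy (u := u) (v := v) hc hlam₀ (one_le_phase hs hlam₀ le_rfl)
  have hfinal := couplingEnergy_le (u := u) (v := v) hc hlam₁ (one_le_phase hs hlam₀ hT.le)
  have hs₀ : phase s lam 0 = s := by simp [phase]
  rw [hs₀] at hinitial
  have hk := one_le_phase hs hlam₀ hT.le
  set k := phase s lam T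
  have hu₀ : 0 ≤ exp (2 * s) * (lam * s ^ 2 * l2Sq u 0 + s * dirichlet u 0) := by
    have := l2Sq_nonneg u 0
    have := dirichlet_nonneg u 0
    positivity
  have hv₀ : 0 ≤ exp (2 * s) * (lam * s * l2Sq v 0) := by
    have := l2Sq_nonneg v 0
    positivity
  have hvT : 0 ≤ exp (2 * k) * dirichlet v T := mul_nonneg (exp_nonneg _) (dirichlet_nonneg v T)
  have hrhs : 0 ≤ (2 * (216 * c + 1) - 1) * (exp (2 * k) * (lam * k * l2Sq v T)
      + exp (2 * s) * dirichlet v 0) := by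
    have := l2Sq_nonneg v T
    have := dirichlet_nonneg v 0
    have : 0 ≤ 2 * (216 * c + 1) - 1 := by linarith
    positivity
  linear_combination hbulk + 288 * hinitial + 288 * hfinal + 287 * hu₀ + 215 * hv₀ + 287 * hvT
    + 288 * hrhs

namespace Admissible

theorem integral_sq_add_grad2_mul (hu : Admissible T u) (ht : t ∈ Icc 0 T) (a b W : ℝ) :
    ∫ x, (a * u x t ^ 2 + b * grad2 u x t) * W = W * (a * l2Sq u t + b * dirichlet u t) := by
  rw [integral_mul_const, integral_add ((hu.sq.integrable ht).const_mul a)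
    ((hu.grad2.integrable ht).const_mul b), integral_const_mul, integral_const_mul, mul_comm W]
  rfl

theorem integral_sq_mul_add_grad2_mul {t' : ℝ} (hu : Admissible T u) (ht : t ∈ Icc 0 T)
    (ht' : t' ∈ Icc 0 T) (a W W' : ℝ) :
    ∫ x, (a * u x t ^ 2 * W + grad2 u x t' * W') = W * (a * l2Sq u t) + W' * dirichlet u t' := by
  rw [integral_add (((hu.sq.integrable ht).const_mul a).mul_const W)
    ((hu.grad2.integrable ht').mul_const W'), integral_mul_const, integral_mul_const,
    integral_const_mul, mul_comm W, mul_comm W']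
  rfl

theorem integral_carleman_density (hu : Admissible T u) (hv : Admissible T v) (hs : s ≠ 0)
    (ht : t ∈ Ioo 0 T) :
    ∫ x, (tder u x t ^ 2 + lap u x t ^ 2 + s * lam * exp (lam * t) * grad2 u x t
          + s ^ 2 * lam ^ 2 * exp (lam * t) ^ 2 * u x t ^ 2
          + 1 / (s * exp (lam * t)) * (tder v x t ^ 2 + lap v x t ^ 2)
          + lam * grad2 v x t + s * lam ^ 2 * exp (lam * t) * v x t ^ 2)
        * exp (2 * s * exp (lam * t))
      = exp (2 * phase s lam t) * couplingForm lam (phase s lam t) u v t := by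
  have hT := ht.1.trans ht.2
  have ht' := Ioo_subset_Icc_self ht
  have hA := (hu.tder hT).sq.integrable ht'
  have hB := hu.lap.sq.integrable ht'
  have hG := (hu.grad2.integrable ht').const_mul (s * lam * exp (lam * t))
  have hN := (hu.sq.integrable ht').const_mul (s ^ 2 * lam ^ 2 * exp (lam * t) ^ 2)
  have ha := (hv.tder hT).sq.integrable ht'
  have hb := hv.lap.sq.integrable ht'
  have hab := (ha.fun_add hb).const_mul (1 / (s * exp (lam * t)))
  have hg := (hv.grad2.integrable ht').const_mul lam
  have hn := (hv.sq.integrable ht').const_mul (s * lam ^ 2 * exp (lam * t))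
  rw [integral_mul_const,
    integral_add (((((hA.fun_add hB).fun_add hG).fun_add hN).fun_add hab).fun_add hg) hn,
    integral_add ((((hA.fun_add hB).fun_add hG).fun_add hN).fun_add hab) hg,
    integral_add (((hA.fun_add hB).fun_add hG).fun_add hN) hab,
    integral_add ((hA.fun_add hB).fun_add hG) hN, integral_add (hA.fun_add hB) hG,
    integral_add hA hB]
  simp only [integral_const_mul]
  have hk : phase s lam t ≠ 0 := mul_ne_zero hs (exp_ne_zero _)
  rw [integral_add ha hb, couplingForm_eq hk]
  simp only [l2Sq, dirichlet, phase]
  ring_nf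

end Admissible

end Carleman

theorem carleman_two_parameters_mfg_general (ρ₀ C₀ : ℝ) :
    ∃ C > (0:ℝ), ∃ s₁ ≥ (1:ℝ), ∀ (d : ℕ) (T : ℝ), 0 < T → ∀ s ≥ 1, ∀ lam ≥ s₁,
      ∀ u v : (Fin d → ℝ) → ℝ → ℝ, Admissible T u → Admissible T v →
      (∀ x : Fin d → ℝ, ∀ t ∈ Set.Ioo (0:ℝ) T,
        |tder u x t + lap u x t| ≤ C₀ * (|u x t| + gradNorm u x t + |v x t|)) →
      (∀ x : Fin d → ℝ, ∀ t ∈ Set.Ioo (0:ℝ) T,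
        |tder v x t - lap v x t - ρ₀ * lap u x t| ≤
          C₀ * (|u x t| + |v x t| + gradNorm u x t + gradNorm v x t)) →
      (∫ t in Set.Ioo (0:ℝ) T, ∫ x : Fin d → ℝ,
          ((tder u x t) ^ 2 + (lap u x t) ^ 2
            + s * lam * Real.exp (lam * t) * grad2 u x t
            + s ^ 2 * lam ^ 2 * (Real.exp (lam * t)) ^ 2 * (u x t) ^ 2
            + (1 / (s * Real.exp (lam * t))) * ((tder v x t) ^ 2 + (lap v x t) ^ 2)
            + lam * grad2 v x t
            + s * lam ^ 2 * Real.exp (lam * t) * (v x t) ^ 2)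
          * Real.exp (2 * s * Real.exp (lam * t)))
      + (∫ x : Fin d → ℝ,
          (s ^ 2 * lam * (u x 0) ^ 2 + s * grad2 u x 0) * Real.exp (2 * s))
      + (∫ x : Fin d → ℝ,
          (s * lam * (v x 0) ^ 2 * Real.exp (2 * s)
            + grad2 v x T * Real.exp (2 * s * Real.exp (lam * T))))
      ≤ C * (∫ x : Fin d → ℝ,
            (s * lam * Real.exp (lam * T) * (v x T) ^ 2
                * Real.exp (2 * s * Real.exp (lam * T))
              + grad2 v x 0 * Real.exp (2 * s)))
        + C * (∫ x : Fin d → ℝ,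
            (s ^ 2 * lam ^ 2 * (Real.exp (lam * T)) ^ 2 * (u x T) ^ 2
              + s * Real.exp (lam * T) * grad2 u x T)
            * Real.exp (2 * s * Real.exp (lam * T))) := by
  let c := 8 * C₀ ^ 2 + 2 * ρ₀ ^ 2
  have hC₀ := sq_nonneg C₀
  have hρ₀ := sq_nonneg ρ₀
  have hc₀ : 0 ≤ c := by positivity
  refine ⟨576 * (216 * c + 1), by positivity, 1 + 432 * c * (216 * c + 2),
    le_add_of_nonneg_right (by positivity), fun d T hT s hs lam hlam u v hu hv hu_eq hv_eq => ?_⟩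
  have h0 : (0 : ℝ) ∈ Icc 0 T := left_mem_Icc.2 hT.le
  have hT' : T ∈ Icc 0 T := right_mem_Icc.2 hT.le
  have hcoupled := hu.carleman_coupled hv hT hs hc₀ hlam
    (fun t ht => hu.l2Sq_heatOp_one_le hv (Ioo_subset_Icc_self ht) (by linarith)
      fun x => hu_eq x t ht)
    (fun t ht => hu.l2Sq_heatOp_neg_one_le hv (Ioo_subset_Icc_self ht) (by linarith) (by linarith)
      fun x => hv_eq x t ht)
  rw [setIntegral_congr_fun measurableSet_Ioo fun t ht =>
      hu.integral_carleman_density hv (zero_lt_one.trans_le hs).ne' ht,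
    hu.integral_sq_add_grad2_mul h0, hu.integral_sq_add_grad2_mul hT',
    hv.integral_sq_mul_add_grad2_mul h0 hT', hv.integral_sq_mul_add_grad2_mul hT' h0]
  simp only [phase, mul_pow] at hcoupled ⊢
  convert hcoupled using 2 <;> ring_nf

/-- Carleman estimate with two large parameters (Theorem 2.1) for the linearized
mean field game system, with weight `φ(t) = e^{λt}`. -/
theorem carleman_two_parameters_mfg
    (d : ℕ) (hd : 1 ≤ d) (T : ℝ) (hT : 0 < T) (ρ₀ C₀ : ℝ) (hC₀ : 0 < C₀) :
    ∃ C > (0:ℝ), ∃ s₁ ≥ (1:ℝ), ∀ s ≥ s₁, ∀ lam ≥ s₁,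
      ∀ u v : (Fin d → ℝ) → ℝ → ℝ, Admissible T u → Admissible T v →
      (∀ x : Fin d → ℝ, ∀ t ∈ Set.Ioo (0:ℝ) T,
        |tder u x t + lap u x t| ≤ C₀ * (|u x t| + gradNorm u x t + |v x t|)) →
      (∀ x : Fin d → ℝ, ∀ t ∈ Set.Ioo (0:ℝ) T,
        |tder v x t - lap v x t - ρ₀ * lap u x t| ≤
          C₀ * (|u x t| + |v x t| + gradNorm u x t + gradNorm v x t)) →
      (∫ t in Set.Ioo (0:ℝ) T, ∫ x : Fin d → ℝ,
          ((tder u x t) ^ 2 + (lap u x t) ^ 2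
            + s * lam * Real.exp (lam * t) * grad2 u x t
            + s ^ 2 * lam ^ 2 * (Real.exp (lam * t)) ^ 2 * (u x t) ^ 2
            + (1 / (s * Real.exp (lam * t))) * ((tder v x t) ^ 2 + (lap v x t) ^ 2)
            + lam * grad2 v x t
            + s * lam ^ 2 * Real.exp (lam * t) * (v x t) ^ 2)
          * Real.exp (2 * s * Real.exp (lam * t)))
      + (∫ x : Fin d → ℝ,
          (s ^ 2 * lam * (u x 0) ^ 2 + s * grad2 u x 0) * Real.exp (2 * s))
      + (∫ x : Fin d → ℝ,
          (s * lam * (v x 0) ^ 2 * Real.exp (2 * s)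
            + grad2 v x T * Real.exp (2 * s * Real.exp (lam * T))))
      ≤ C * (∫ x : Fin d → ℝ,
            (s * lam * Real.exp (lam * T) * (v x T) ^ 2
                * Real.exp (2 * s * Real.exp (lam * T))
              + grad2 v x 0 * Real.exp (2 * s)))
        + C * (∫ x : Fin d → ℝ,
            (s ^ 2 * lam ^ 2 * (Real.exp (lam * T)) ^ 2 * (u x T) ^ 2
              + s * Real.exp (lam * T) * grad2 u x T)
            * Real.exp (2 * s * Real.exp (lam * T))) := by
  obtain ⟨C, hC, s₁, hs₁, hmain⟩ := carleman_two_parameters_mfg_general ρ₀ C₀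
  exact ⟨C, hC, s₁, hs₁, fun s hs => hmain d T hT s (hs₁.trans hs)⟩
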